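/- lim_{B→∞} B^{−3/2} · ∫_0^∞ ln(1 + sinh²(B/2)·erfc(η)·erfc(−η)) dη = 2/3. -/

import Mathlib

/-!
Rescaling `η = √B t` turns `B ^ (-3/2) ∫ log (1 + ⋯) dη` into the integral over `t > 0` of
`B⁻¹ log (1 + sinh² (B/2) erfc (√B t) erfc (-√B t))`. To exponential order in `B` the product inside
the logarithm is `exp (B (1 - t²))`, because `sinh² (B/2)` grows like `exp B`, `erfc (√B t)` decays
like `exp (-B t²)` and `erfc (-√B t)` tends to `2`. Hence the integrand tends to `max 0 (1 - t²)`,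
whose integral is `2/3`. Superadditivity of `x ↦ x ^ B` for `B ≥ 1` bounds the integrand by
`exp (1 - t²)` uniformly in `B`, so dominated convergence applies.
-/

open MeasureTheory Real Filter Topology

/-- The complementary error function `erfc(x) = (2/√π) ∫_x^∞ e^{−u²} du`. -/
noncomputable def erfc (x : ℝ) : ℝ := (2 / Real.sqrt π) * ∫ u in Set.Ioi x, Real.exp (-u ^ 2)

lemma integrable_exp_neg_sq : Integrable fun u : ℝ => exp (-u ^ 2) := by
  simpa using integrable_exp_neg_mul_sq one_pos

lemma integral_exp_neg_sq_Ioi : ∫ u in Set.Ioi (0 : ℝ), exp (-u ^ 2) = √π / 2 := by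
  simpa using integral_gaussian_Ioi 1

lemma integral_max_zero_one_sub_pow_Ioi (n : ℕ) :
    ∫ t in Set.Ioi (0 : ℝ), max 0 (1 - t ^ n) = n / (n + 1) := by
  have vanishes_off_unit (t : ℝ) (ht : t ∈ Set.Ioi 0 \ Set.Ioc 0 1) : max 0 (1 - t ^ n) = 0 := by
    have one_lt : 1 < t := not_le.1 fun h => ht.2 ⟨ht.1, h⟩
    exact max_eq_left (sub_nonpos.2 (one_le_pow₀ one_lt.le))
  have eq_on_unit (t : ℝ) (ht : t ∈ Set.Ioc 0 1) : max 0 (1 - t ^ n) = 1 - t ^ n :=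
    max_eq_right (sub_nonneg.2 (pow_le_one₀ ht.1.le ht.2))
  calc ∫ t in Set.Ioi (0 : ℝ), max 0 (1 - t ^ n)
      = ∫ t in Set.Ioc (0 : ℝ) 1, max 0 (1 - t ^ n) :=
        setIntegral_eq_of_subset_of_forall_sdiff_eq_zero measurableSet_Ioi
          Set.Ioc_subset_Ioi_self vanishes_off_unit
    _ = ∫ t in (0 : ℝ)..1, (1 - t ^ n) := by
        rw [setIntegral_congr_fun measurableSet_Ioc eq_on_unit,
          intervalIntegral.integral_of_le zero_le_one]
    _ = n / (n + 1) := by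
        rw [intervalIntegral.integral_sub (by simp) (by simp), integral_pow,
          intervalIntegral.integral_const, smul_eq_mul, one_pow, zero_pow n.succ_ne_zero]
        field_simp
        ring

lemma rpow_neg_three_halves_mul_integral_Ioi {B : ℝ} (hB : 0 < B) (f : ℝ → ℝ) :
    B ^ (-(3 : ℝ) / 2) * ∫ η in Set.Ioi 0, f η = ∫ t in Set.Ioi 0, f (√B * t) / B := by
  rw [integral_div, integral_comp_mul_left_Ioi f 0 (sqrt_pos.2 hB), mul_zero, smul_eq_mul,
    mul_div_right_comm, sqrt_eq_rpow, ← rpow_neg hB.le, ← rpow_sub_one hB.ne']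
  norm_num

lemma log_one_add_rpow_le {a p : ℝ} (ha : 0 ≤ a) (hp : 1 ≤ p) : log (1 + a ^ p) ≤ p * a := by
  have superadditive : 1 + a ^ p ≤ (1 + a) ^ p := by
    simpa using add_rpow_le_rpow_add zero_le_one ha hp
  calc log (1 + a ^ p) ≤ log ((1 + a) ^ p) := log_le_log (by positivity) superadditive
    _ = p * log (1 + a) := log_rpow (by positivity) p
    _ ≤ p * a := by
        gcongr
        linarith [log_le_sub_one_of_pos (x := 1 + a) (by positivity)]

lemma posLog_le_log_one_add {a : ℝ} (ha : 0 ≤ a) : log⁺ a ≤ log (1 + a) := by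
  rw [posLog_eq_log_max_one ha]
  exact log_le_log (by positivity) (max_le (by linarith) (by linarith))

lemma log_one_add_le_log_two_add_posLog {a : ℝ} (ha : 0 ≤ a) :
    log (1 + a) ≤ log 2 + log⁺ a := by
  rw [← posLog_eq_log (by rw [abs_of_nonneg] <;> linarith)]
  simpa using posLog_add (x := 1) (y := a)

lemma tendsto_log_one_add_div {α : Type*} {l : Filter α} {a b : α → ℝ} {L : ℝ}
    (ha : ∀ᶠ i in l, 0 ≤ a i) (hb : Tendsto b l atTop)
    (hL : Tendsto (fun i => log (a i) / b i) l (𝓝 L)) :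
    Tendsto (fun i => log (1 + a i) / b i) l (𝓝 (max 0 L)) := by
  have posLog_limit : Tendsto (fun i => log⁺ (a i) / b i) l (𝓝 (max 0 L)) := by
    refine (tendsto_const_nhds.max hL).congr' ?_
    filter_upwards [hb.eventually_gt_atTop 0] with i hi
    rw [posLog_apply, ← max_div_div_right hi.le, zero_div]
  have upper_limit : Tendsto (fun i => log 2 / b i + log⁺ (a i) / b i) l (𝓝 (max 0 L)) := by
    simpa using (hb.const_div_atTop (log 2)).add posLog_limit
  refine tendsto_of_tendsto_of_tendsto_of_le_of_le' posLog_limit upper_limit ?_ ?_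
  · filter_upwards [ha, hb.eventually_gt_atTop 0] with i hai hbi
    gcongr
    exact posLog_le_log_one_add hai
  · filter_upwards [ha, hb.eventually_gt_atTop 0] with i hai hbi
    rw [← add_div]
    gcongr
    exact log_one_add_le_log_two_add_posLog hai

lemma sinh_le_exp_div_two (x : ℝ) : sinh x ≤ exp x / 2 := by
  rw [sinh_eq]
  gcongr
  linarith [exp_pos (-x)]

lemma tendsto_log_sinh_div_self : Tendsto (fun x => log (sinh x) / x) atTop (𝓝 1) := by
  have correction : Tendsto (fun x : ℝ => log ((1 - exp (-(2 * x))) / 2)) atTop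
      (𝓝 (log ((1 - 0) / 2))) :=
    (((tendsto_exp_neg_atTop_nhds_zero.comp
      (tendsto_id.const_mul_atTop two_pos)).const_sub 1).div_const 2).log (by norm_num)
  have limit := (correction.div_atTop tendsto_id).const_add 1
  rw [add_zero] at limit
  refine limit.congr' ?_
  filter_upwards [eventually_gt_atTop 0] with x hx
  have factor_pos : 0 < (1 - exp (-(2 * x))) / 2 := by
    have : exp (-(2 * x)) < 1 := exp_lt_one_iff.2 (by linarith)
    linarith
  have sinh_factor : sinh x = exp x * ((1 - exp (-(2 * x))) / 2) := by
    rw [sinh_eq, mul_div_assoc', mul_sub, mul_one, ← exp_add]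
    ring_nf
  rw [sinh_factor, log_mul (exp_ne_zero x) factor_pos.ne', log_exp, add_div, div_self hx.ne', id]

lemma erfc_pos (x : ℝ) : 0 < erfc x := by
  have : NeZero (volume.restrict (Set.Ioi x)) := ⟨by simp [Measure.restrict_eq_zero]⟩
  exact mul_pos (by positivity) (integral_exp_pos integrable_exp_neg_sq.integrableOn)

lemma erfc_antitone : Antitone erfc := fun x y hxy =>
  mul_le_mul_of_nonneg_left
    (setIntegral_mono_set integrable_exp_neg_sq.integrableOn
      (Eventually.of_forall fun _ => (exp_pos _).le) (Set.Ioi_subset_Ioi hxy).eventuallyLE)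
    (by positivity)

lemma erfc_neg (x : ℝ) : erfc (-x) = 2 - erfc x := by
  have total : (∫ u in Set.Ioi (-x), exp (-u ^ 2)) + ∫ u in Set.Ioi x, exp (-u ^ 2) = √π := by
    calc (∫ u in Set.Ioi (-x), exp (-u ^ 2)) + ∫ u in Set.Ioi x, exp (-u ^ 2)
        = (∫ u in Set.Iic x, exp (-u ^ 2)) + ∫ u in Set.Ioi x, exp (-u ^ 2) := by
          simp only [← integral_comp_neg_Iic x fun u : ℝ => exp (-u ^ 2), neg_sq]
      _ = ∫ u, exp (-u ^ 2) :=
          intervalIntegral.integral_Iic_add_Ioi integrable_exp_neg_sq.integrableOn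
            integrable_exp_neg_sq.integrableOn
      _ = √π := by simpa using integral_gaussian 1
  rw [erfc, erfc, eq_sub_iff_add_eq, ← mul_add, total]
  exact div_mul_cancel₀ 2 (sqrt_pos.2 pi_pos).ne'

lemma erfc_lt_two (x : ℝ) : erfc x < 2 := by
  linarith [erfc_neg x, erfc_pos (-x)]

lemma erfc_le_exp_neg_sq {x : ℝ} (hx : 0 ≤ x) : erfc x ≤ exp (-x ^ 2) := by
  have translate : ∫ u in Set.Ioi x, exp (-u ^ 2) = ∫ v in Set.Ioi 0, exp (-(v + x) ^ 2) := by
    simpa using ((measurePreserving_add_right volume x).setIntegral_preimage_emb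
      (measurableEmbedding_addRight x) (fun u => exp (-u ^ 2)) (Set.Ioi x)).symm
  have tail_le : ∫ u in Set.Ioi x, exp (-u ^ 2) ≤ exp (-x ^ 2) * (√π / 2) := by
    rw [translate, ← integral_exp_neg_sq_Ioi, ← integral_const_mul]
    refine setIntegral_mono_on (integrable_exp_neg_sq.comp_add_right x).integrableOn
      (integrable_exp_neg_sq.const_mul _).integrableOn measurableSet_Ioi fun v hv => ?_
    rw [← exp_add]
    gcongr
    nlinarith [mul_nonneg (le_of_lt hv) hx]
  calc erfc x ≤ 2 / √π * (exp (-x ^ 2) * (√π / 2)) := by unfold erfc; gcongr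
    _ = exp (-x ^ 2) := by field_simp

lemma mul_exp_neg_add_sq_le_erfc {x h : ℝ} (hx : 0 ≤ x) (hh : 0 ≤ h) :
    2 / √π * (h * exp (-(x + h) ^ 2)) ≤ erfc x := by
  unfold erfc
  gcongr
  calc h * exp (-(x + h) ^ 2) = ∫ _ in Set.Ioc x (x + h), exp (-(x + h) ^ 2) := by simp [hh]
    _ ≤ ∫ u in Set.Ioc x (x + h), exp (-u ^ 2) := by
        refine setIntegral_mono_on (by simp) integrable_exp_neg_sq.integrableOn
          measurableSet_Ioc fun u hu => ?_
        have : 0 ≤ u := hx.trans hu.1.le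
        gcongr
        exact hu.2
    _ ≤ ∫ u in Set.Ioi x, exp (-u ^ 2) :=
        setIntegral_mono_set integrable_exp_neg_sq.integrableOn
          (Eventually.of_forall fun _ => (exp_pos _).le) Set.Ioc_subset_Ioi_self.eventuallyLE

lemma tendsto_erfc_atTop : Tendsto erfc atTop (𝓝 0) := by
  have gaussian_limit : Tendsto (fun x : ℝ => exp (-x ^ 2)) atTop (𝓝 0) :=
    tendsto_exp_neg_atTop_nhds_zero.comp (tendsto_pow_atTop two_ne_zero)
  refine squeeze_zero' (Eventually.of_forall fun x => (erfc_pos x).le) ?_ gaussian_limit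
  filter_upwards [eventually_ge_atTop 0] with x hx using erfc_le_exp_neg_sq hx

lemma tendsto_erfc_atBot : Tendsto erfc atBot (𝓝 2) := by
  have reflected := (tendsto_erfc_atTop.comp tendsto_neg_atBot_atTop).const_sub 2
  simpa [Function.comp_def, erfc_neg] using reflected

lemma tendsto_log_erfc_div_sq : Tendsto (fun x => log (erfc x) / x ^ 2) atTop (𝓝 (-1)) := by
  have lower_limit : Tendsto (fun x : ℝ => log (2 / √π) / x ^ 2 - (1 + 1 / x) ^ 2) atTop
      (𝓝 (-1)) := by
    simpa using ((tendsto_pow_atTop two_ne_zero).const_div_atTop (log (2 / √π))).sub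
      (((tendsto_id.const_div_atTop (1 : ℝ)).const_add 1).pow 2)
  refine tendsto_of_tendsto_of_tendsto_of_le_of_le' lower_limit tendsto_const_nhds ?_ ?_
  · filter_upwards [eventually_gt_atTop 0] with x hx
    have log_bound := log_le_log (by positivity) (mul_exp_neg_add_sq_le_erfc hx.le zero_le_one)
    rw [one_mul, log_mul (by positivity) (exp_ne_zero _), log_exp] at log_bound
    calc log (2 / √π) / x ^ 2 - (1 + 1 / x) ^ 2
        = (log (2 / √π) + -(x + 1) ^ 2) / x ^ 2 := by field_simp; ring
      _ ≤ log (erfc x) / x ^ 2 := by gcongr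
  · filter_upwards [eventually_gt_atTop 0] with x hx
    rw [div_le_iff₀ (by positivity), neg_one_mul]
    exact (log_le_iff_le_exp (erfc_pos x)).2 (erfc_le_exp_neg_sq hx.le)

/-- The integrand `ln(1 + sinh²(B/2) erfc(η) erfc(−η))` of the parametric expression of the
quenched large deviation function. -/
noncomputable def quenchedIntegrand (B η : ℝ) : ℝ :=
  log (1 + sinh (B / 2) ^ 2 * erfc η * erfc (-η))

lemma quenchedIntegrand_nonneg (B η : ℝ) : 0 ≤ quenchedIntegrand B η := by
  have := erfc_pos η
  have := erfc_pos (-η)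
  exact log_nonneg (le_add_of_nonneg_right (by positivity))

lemma measurable_quenchedIntegrand (B : ℝ) : Measurable (quenchedIntegrand B) := by
  have := erfc_antitone.measurable
  unfold quenchedIntegrand
  fun_prop

lemma quenchedIntegrand_le {B η : ℝ} (hB : 0 ≤ B) (hη : 0 ≤ η) :
    quenchedIntegrand B η ≤ log (1 + exp (B - η ^ 2)) := by
  have := erfc_pos η
  have := erfc_pos (-η)
  have : 0 ≤ sinh (B / 2) := sinh_nonneg_iff.2 (by positivity)
  refine log_le_log (by positivity) (add_le_add_right ?_ 1)
  calc sinh (B / 2) ^ 2 * erfc η * erfc (-η)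
      ≤ (exp (B / 2) / 2) ^ 2 * exp (-η ^ 2) * 2 := by
        gcongr
        exacts [sinh_le_exp_div_two _, erfc_le_exp_neg_sq hη, (erfc_lt_two _).le]
    _ = exp (B - η ^ 2) / 2 := by
        rw [div_pow, ← exp_nat_mul, sub_eq_add_neg, exp_add]
        push_cast
        ring_nf
    _ ≤ exp (B - η ^ 2) := half_le_self (exp_pos _).le

lemma quenchedIntegrand_sqrt_mul_div_le {B t : ℝ} (hB : 1 ≤ B) (ht : 0 ≤ t) :
    quenchedIntegrand B (√B * t) / B ≤ exp (1 - t ^ 2) := by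
  have B_pos : 0 < B := one_pos.trans_le hB
  rw [div_le_iff₀' B_pos]
  calc quenchedIntegrand B (√B * t) ≤ log (1 + exp (B - (√B * t) ^ 2)) :=
        quenchedIntegrand_le B_pos.le (by positivity)
    _ = log (1 + exp (1 - t ^ 2) ^ B) := by
        rw [mul_pow, sq_sqrt B_pos.le, ← exp_mul]
        ring_nf
    _ ≤ B * exp (1 - t ^ 2) := log_one_add_rpow_le (exp_pos _).le hB

lemma tendsto_quenchedIntegrand_sqrt_mul_div {t : ℝ} (ht : 0 < t) :
    Tendsto (fun B => quenchedIntegrand B (√B * t) / B) atTop (𝓝 (max 0 (1 - t ^ 2))) := by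
  have argument_atTop : Tendsto (fun B : ℝ => √B * t) atTop atTop :=
    tendsto_sqrt_atTop.atTop_mul_const ht
  have sinh_rate : Tendsto (fun B : ℝ => log (sinh (B / 2)) / (B / 2)) atTop (𝓝 1) :=
    tendsto_log_sinh_div_self.comp (tendsto_id.atTop_div_const two_pos)
  have erfc_rate := (tendsto_log_erfc_div_sq.comp argument_atTop).const_mul (t ^ 2)
  have erfc_neg_rate : Tendsto (fun B => log (erfc (-(√B * t))) / B) atTop (𝓝 0) :=
    ((tendsto_erfc_atBot.comp (tendsto_neg_atTop_atBot.comp argument_atTop)).log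
      two_ne_zero).div_atTop tendsto_id
  refine tendsto_log_one_add_div (Eventually.of_forall fun B => ?_) tendsto_id ?_
  · have := erfc_pos (√B * t)
    have := erfc_pos (-(√B * t))
    positivity
  · have sum_limit := (sinh_rate.add erfc_rate).add erfc_neg_rate
    rw [mul_neg_one, add_zero, ← sub_eq_add_neg] at sum_limit
    refine sum_limit.congr' ?_
    filter_upwards [eventually_gt_atTop 0] with B hB
    have : 0 < sinh (B / 2) := sinh_pos_iff.2 (by positivity)
    have erfc_ne := (erfc_pos (√B * t)).ne'
    rw [log_mul (by positivity) (erfc_pos _).ne', log_mul (by positivity) erfc_ne, log_pow]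
    simp only [Function.comp_apply, mul_pow, sq_sqrt hB.le]
    field_simp
    push_cast
    ring

lemma tendsto_integral_quenchedIntegrand_sqrt_mul_div :
    Tendsto (fun B => ∫ t in Set.Ioi 0, quenchedIntegrand B (√B * t) / B)
      atTop (𝓝 (∫ t in Set.Ioi 0, max 0 (1 - t ^ 2))) := by
  refine tendsto_integral_filter_of_dominated_convergence (fun t => exp (1 - t ^ 2)) ?_ ?_ ?_ ?_
  · refine Eventually.of_forall fun B => Measurable.aestronglyMeasurable ?_
    exact ((measurable_quenchedIntegrand B).comp (measurable_const_mul _)).div_const B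
  · filter_upwards [eventually_ge_atTop 1] with B hB
    filter_upwards [self_mem_ae_restrict measurableSet_Ioi] with t ht
    rw [norm_of_nonneg (div_nonneg (quenchedIntegrand_nonneg _ _) (zero_le_one.trans hB))]
    exact quenchedIntegrand_sqrt_mul_div_le hB (le_of_lt ht)
  · simpa only [sub_eq_add_neg, exp_add] using
      (integrable_exp_neg_sq.const_mul (exp 1)).restrict
  · filter_upwards [self_mem_ae_restrict measurableSet_Ioi] with t ht
    exact tendsto_quenchedIntegrand_sqrt_mul_div ht

/-- `lim_{B→∞} B^{−3/2} ∫_0^∞ ln(1 + sinh²(B/2)·erfc(η)·erfc(−η)) dη = 2/3`. -/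
theorem quenched_integral_growth :
    Tendsto (fun B : ℝ =>
        B ^ (-(3 : ℝ) / 2) *
          ∫ η in Set.Ioi (0 : ℝ),
            Real.log (1 + Real.sinh (B / 2) ^ 2 * erfc η * erfc (-η)))
      atTop (nhds (2 / 3)) := by
  have rescaled_limit := tendsto_integral_quenchedIntegrand_sqrt_mul_div
  rw [integral_max_zero_one_sub_pow_Ioi, Nat.cast_ofNat, two_add_one_eq_three] at rescaled_limit
  refine rescaled_limit.congr' ?_
  filter_upwards [eventually_gt_atTop 0] with B hB
  exact (rpow_neg_three_halves_mul_integral_Ioi hB (quenchedIntegrand B)).symm
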